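/- Let α, β, γ > −1 with α+γ+3/2 > 0 and β+γ+3/2 > 0. Suppose that for each pair (α',β') ∈ {(α,β), (α+1,β+1), (α,β+1), (α+1,β)} and each n, {P_{k,n}^{α',β',γ} : 0 ≤ k ≤ n} is an orthonormal basis of V_n(W_{α',β',γ}) on Ω. Set b^{(i,j)} := (a_{α+i,β+j,γ} / a_{α,β,γ})^{1/2} and s(x,y) := (2xy, x²+y²−1). Then for every n ≥ 0: the 2n+1 polynomials ₁Q_{k,2n}(x,y) := P_{k,n}^{α,β,γ}(s(x,y)) (0 ≤ k ≤ n) and ₂Q_{k,2n}(x,y) := b^{(1,1)} (x²−y²) P_{k,n−1}^{α+1,β+1,γ}(s(x,y)) (0 ≤ k ≤ n−1) form an orthonormal basis of V_{2n}(𝒲_{α,β,γ}), and the 2n+2 polynomials ₁Q_{k,2n+1}(x,y) := b^{(0,1)} (x+y) P_{k,n}^{α,β+1,γ}(s(x,y)) (0 ≤ k ≤ n) and ₂Q_{k,2n+1}(x,y) := b^{(1,0)} (x−y) P_{k,n}^{α+1,β,γ}(s(x,y)) (0 ≤ k ≤ n) form an orthonormal basis of V_{2n+1}(𝒲_{α,β,γ}),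 with respect to ⟨f,g⟩ := ∫_{[−1,1]²} f g 𝒲_{α,β,γ}. -/

import Mathlib

open MeasureTheory Real Set Filter
open scoped ENNReal

noncomputable section

/-- The parabolic-type domain `Ω`, the image of the triangle `-1 < x < y < 1`
under `(x, y) ↦ (x + y, x y)`. -/
def omegaDom : Set (ℝ × ℝ) :=
  {q | ∃ x y : ℝ, -1 < x ∧ x < y ∧ y < 1 ∧ q = (x + y, x * y)}

/-- The square `[-1,1]²`. -/
def sqDom : Set (ℝ × ℝ) := Icc (-1 : ℝ) 1 ×ˢ Icc (-1 : ℝ) 1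

/-- The open triangle `-1 < x < y < 1`. -/
def triDom : Set (ℝ × ℝ) := {q | -1 < q.1 ∧ q.1 < q.2 ∧ q.2 < 1}

/-- The smaller root `x(u,v)` of `t² - u t + v = 0`. -/
def xRoot (q : ℝ × ℝ) : ℝ := (q.1 - Real.sqrt (q.1 ^ 2 - 4 * q.2)) / 2

/-- The larger root `y(u,v)` of `t² - u t + v = 0`. -/
def yRoot (q : ℝ × ℝ) : ℝ := (q.1 + Real.sqrt (q.1 ^ 2 - 4 * q.2)) / 2

/-- Evaluation of a two-variable polynomial at a point of `ℝ²`. -/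
def evalP (P : MvPolynomial (Fin 2) ℝ) (q : ℝ × ℝ) : ℝ :=
  MvPolynomial.eval ![q.1, q.2] P

/-- The space `V_n(W)` of orthogonal polynomials of degree `n` for the weight `W`
on the domain `D`: polynomials of exact total degree `n` orthogonal to all
polynomials of lower degree. -/
def Vpoly (D : Set (ℝ × ℝ)) (W : ℝ × ℝ → ℝ) (n : ℕ) : Set (MvPolynomial (Fin 2) ℝ) :=
  {P | P.totalDegree = n ∧ ∀ Q : MvPolynomial (Fin 2) ℝ, Q.totalDegree < n →
    (∫ q in D, evalP P q * evalP Q q * W q) = 0}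

/-- `Q 0, …, Q n` is an orthonormal basis of `V_n(W)` on `D`. -/
def isONBVn (D : Set (ℝ × ℝ)) (W : ℝ × ℝ → ℝ) (n : ℕ)
    (Q : ℕ → MvPolynomial (Fin 2) ℝ) : Prop :=
  (∀ k, k ≤ n → Q k ∈ Vpoly D W n) ∧
  (∀ k, k ≤ n → ∀ j, j ≤ n →
    (∫ q in D, evalP (Q k) q * evalP (Q j) q * W q) = if k = j then 1 else 0) ∧
  (∀ R ∈ Vpoly D W n, R ∈ Submodule.span ℝ (Q '' Set.Iic n))

/-- `K` is the reproducing kernel of `Π_n²` in `L²(W)` on the domain `D`: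
it is a polynomial function, for each fixed `x ∈ D` it is a polynomial of total
degree `≤ n` in the second variable, and it reproduces every polynomial of total
degree `≤ n`. -/
def IsRK (D : Set (ℝ × ℝ)) (W : ℝ × ℝ → ℝ) (n : ℕ) (K : ℝ × ℝ → ℝ × ℝ → ℝ) : Prop :=
  (∃ KP : MvPolynomial (Fin 4) ℝ,
    ∀ x y : ℝ × ℝ, K x y = MvPolynomial.eval ![x.1, x.2, y.1, y.2] KP) ∧
  (∀ x ∈ D, ∃ P : MvPolynomial (Fin 2) ℝ, P.totalDegree ≤ n ∧ ∀ y, K x y = evalP P y) ∧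
  (∀ P : MvPolynomial (Fin 2) ℝ, P.totalDegree ≤ n →
    ∀ x ∈ D, (∫ y in D, K x y * evalP P y * W y) = evalP P x)

/-- `p` is the sequence of orthonormal polynomials with respect to the weight `w`
on `[-1,1]`: `p n` has degree exactly `n`, positive leading coefficient, and the
`p n` are orthonormal in `L²(w)`. -/
def IsONPS (w : ℝ → ℝ) (p : ℕ → Polynomial ℝ) : Prop :=
  (∀ n, (p n).natDegree = n) ∧ (∀ n, 0 < (p n).leadingCoeff) ∧
  (∀ n m, (∫ x in Icc (-1:ℝ) 1, (p n).eval x * (p m).eval x * w x)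
    = if n = m then 1 else 0)

/-- The Christoffel–Darboux kernel `k_n(x,y) = ∑_{j=0}^n p_j(x) p_j(y)`. -/
def CDK (p : ℕ → Polynomial ℝ) (n : ℕ) (x y : ℝ) : ℝ :=
  ∑ j ∈ Finset.range (n + 1), (p j).eval x * (p j).eval y

/-- The Jacobi factor `J_{a,b}(x) = (1-x)^a (1+x)^b`. -/
def Jw (a b : ℝ) (x : ℝ) : ℝ := (1 - x) ^ a * (1 + x) ^ b

/-- The factor `J*_{a,b}(u,v) = (1-u+v)^a (1+u+v)^b` on `Ω`. -/
def JstarW (a b : ℝ) (q : ℝ × ℝ) : ℝ := (1 - q.1 + q.2) ^ a * (1 + q.1 + q.2) ^ b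

/-- Modulus of continuity of `ψ` on `[-1,1]`. -/
def modCont (ψ : ℝ → ℝ) (t : ℝ) : ℝ :=
  sSup {d : ℝ | ∃ x ∈ Icc (-1:ℝ) 1, ∃ y ∈ Icc (-1:ℝ) 1, |x - y| ≤ t ∧ d = |ψ x - ψ y|}

/-- The generalized Jacobi class `GJ`. -/
def IsGJ (w : ℝ → ℝ) : Prop :=
  ∃ (r : ℕ) (ψ : ℝ → ℝ) (γ₀ γ₁ : ℝ) (γs xs : Fin r → ℝ),
    -1 < γ₀ ∧ -1 < γ₁ ∧ (∀ i, -1 < γs i) ∧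
    StrictMono xs ∧ (∀ i, xs i ∈ Ioo (-1:ℝ) 1) ∧
    ContinuousOn ψ (Icc (-1:ℝ) 1) ∧ (∀ x ∈ Icc (-1:ℝ) 1, 0 < ψ x) ∧
    IntegrableOn (fun t => modCont ψ t / t) (Ioc (0:ℝ) 1) ∧
    (∀ x : ℝ, |x| ≤ 1 → w x = ψ x * (1 - x) ^ γ₀ * (1 + x) ^ γ₁ * ∏ i, |x - xs i| ^ γs i) ∧
    (∀ x : ℝ, 1 < |x| → w x = 0)

/-- The `L^p`-norm `‖f‖_{w,e}` on `[-1,1]` (as an extended nonnegative real). -/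
def lpnormI (w : ℝ → ℝ) (e : ℝ) (f : ℝ → ℝ) : ℝ≥0∞ :=
  (∫⁻ x in Icc (-1:ℝ) 1, ENNReal.ofReal (|f x| ^ e * w x)) ^ (1 / e)

/-- The `L^p`-norm `‖f‖_{W,e}` on a planar domain `D` (as an extended nonnegative real). -/
def lpnormD (D : Set (ℝ × ℝ)) (W : ℝ × ℝ → ℝ) (e : ℝ) (f : ℝ × ℝ → ℝ) : ℝ≥0∞ :=
  (∫⁻ q in D, ENNReal.ofReal (|f q| ^ e * W q)) ^ (1 / e)

/-- The operator `s_n^{i,j}(w; f, x)` built from the Christoffel–Darboux kernel of the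
orthonormal polynomials `pij` of the weight `J_{i,j} w`. -/
def snOp (w : ℝ → ℝ) (pij : ℕ → Polynomial ℝ) (i j : ℝ) (n : ℕ) (f : ℝ → ℝ) (x : ℝ) : ℝ :=
  Jw (i/2) (j/2) x * ∫ y in Icc (-1:ℝ) 1, f y * CDK pij n x y * Jw (i/2) (j/2) y * w y

/-- Substitution `(x, y) ↦ (2 x y, x² + y² - 1)` on two-variable polynomials. -/
def quadSub (P : MvPolynomial (Fin 2) ℝ) : MvPolynomial (Fin 2) ℝ :=
  MvPolynomial.aeval
    ![2 * MvPolynomial.X 0 * MvPolynomial.X 1,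
      MvPolynomial.X 0 ^ 2 + MvPolynomial.X 1 ^ 2 - 1] P

/-- A one-variable polynomial viewed as a polynomial in the first variable. -/
def polyX (q : Polynomial ℝ) : MvPolynomial (Fin 2) ℝ :=
  Polynomial.aeval (MvPolynomial.X 0) q

/-- A one-variable polynomial viewed as a polynomial in the second variable. -/
def polyY (q : Polynomial ℝ) : MvPolynomial (Fin 2) ℝ :=
  Polynomial.aeval (MvPolynomial.X 1) q

/-! ### Measure-theoretic preliminaries -/

lemma k7_fold (e : ℝ × ℝ ≃ᵐ ℝ × ℝ) (hm : MeasurePreserving e volume volume)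
    (A H : Set (ℝ × ℝ)) (hH : MeasurableSet H)
    (hAe : e ⁻¹' A = A) (hHe : (e ⁻¹' H : Set (ℝ × ℝ)) =ᵐ[volume] (Hᶜ : Set (ℝ × ℝ)))
    (G : ℝ × ℝ → ℝ) (hG : ∀ q, G (e q) = G q) :
    (IntegrableOn G A ↔ IntegrableOn G (A ∩ H)) ∧
      (∫ q in A, G q) = 2 * ∫ q in A ∩ H, G q := by
  have hGe : G ∘ e = G := funext hG
  have hset : (e ⁻¹' (A ∩ H) : Set (ℝ × ℝ)) =ᵐ[volume] (A ∩ Hᶜ : Set (ℝ × ℝ)) := by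
    rw [preimage_inter, hAe]
    exact (ae_eq_refl _).inter hHe
  have h1 : IntegrableOn G (A ∩ Hᶜ) ↔ IntegrableOn G (A ∩ H) := by
    have := hm.integrableOn_comp_preimage (f := G) (s := A ∩ H) e.measurableEmbedding
    rw [hGe] at this
    exact (integrableOn_congr_set_ae hset).symm.trans this
  have h2 : (∫ q in A ∩ Hᶜ, G q) = ∫ q in A ∩ H, G q := by
    rw [← hm.setIntegral_preimage_emb e.measurableEmbedding G (A ∩ H), setIntegral_congr_set hset]
    simp only [hG]
  have h3 : IntegrableOn G A ↔ IntegrableOn G (A ∩ H) := by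
    constructor
    · exact fun h => h.mono_set inter_subset_left
    · intro h
      have := h.union (h1.2 h)
      rwa [inter_union_compl] at this
  refine ⟨h3, ?_⟩
  by_cases hi : IntegrableOn G A
  · have := integral_inter_add_sdiff hH hi
    rw [← this, sdiff_eq, h2]; ring
  · rw [integral_undef hi, integral_undef (fun h => hi (h3.2 h))]; simp

def k7s1 : ℝ × ℝ ≃ᵐ ℝ × ℝ := MeasurableEquiv.prodComm

def k7s2 : ℝ × ℝ ≃ᵐ ℝ × ℝ := MeasurableEquiv.prodComm.trans (MeasurableEquiv.neg (ℝ × ℝ))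

lemma k7s1_apply (q : ℝ × ℝ) : k7s1 q = (q.2, q.1) := rfl
lemma k7s2_apply (q : ℝ × ℝ) : k7s2 q = (-q.2, -q.1) := rfl

lemma k7s1_mp : MeasurePreserving k7s1 volume volume :=
  Measure.measurePreserving_swap (μ := (volume : Measure ℝ)) (ν := (volume : Measure ℝ))

lemma k7s2_mp : MeasurePreserving k7s2 volume volume :=
  (Measure.measurePreserving_neg (volume : Measure (ℝ × ℝ))).comp k7s1_mp

lemma k7_line_null (a b : ℝ) (h : a ≠ 0) :
    (volume : Measure (ℝ × ℝ)) {q | a * q.1 + b * q.2 = 0} = 0 := by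
  let f : ℝ × ℝ →ₗ[ℝ] ℝ := a • LinearMap.fst ℝ ℝ ℝ + b • LinearMap.snd ℝ ℝ ℝ
  have : {q : ℝ × ℝ | a * q.1 + b * q.2 = 0} = (LinearMap.ker f : Set (ℝ × ℝ)) := by
    ext q; simp [f]
  rw [this]
  apply Measure.addHaar_submodule
  intro ht
  have : ((1, 0) : ℝ × ℝ) ∈ LinearMap.ker f := by rw [ht]; trivial
  simp [f] at this
  exact h this

/-- fundamental triangle -/
def k7T : Set (ℝ × ℝ) := {q | q.2 < q.1 ∧ -q.2 < q.1 ∧ q.1 < 1}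

lemma k7T_open : IsOpen k7T := by
  have a : IsOpen {q : ℝ × ℝ | q.2 < q.1} := isOpen_lt (by fun_prop) (by fun_prop)
  have b : IsOpen {q : ℝ × ℝ | -q.2 < q.1} := isOpen_lt (by fun_prop) (by fun_prop)
  have c : IsOpen {q : ℝ × ℝ | q.1 < 1} := isOpen_lt (by fun_prop) (by fun_prop)
  exact a.inter (b.inter c)

def k7s (q : ℝ × ℝ) : ℝ × ℝ := (2 * q.1 * q.2, q.1 ^ 2 + q.2 ^ 2 - 1)

lemma k7_sq_fold (G : ℝ × ℝ → ℝ) (h1 : ∀ q, G (q.2, q.1) = G q)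
    (h2 : ∀ q, G (-q.2, -q.1) = G q) :
    (IntegrableOn G sqDom ↔ IntegrableOn G k7T) ∧
      (∫ q in sqDom, G q) = 4 * ∫ q in k7T, G q := by
  let A : Set (ℝ × ℝ) := Ioo (-1 : ℝ) 1 ×ˢ Ioo (-1 : ℝ) 1
  have hA : (sqDom : Set (ℝ × ℝ)) =ᵐ[volume] A :=
    (Measure.set_prod_ae_eq Ioo_ae_eq_Icc Ioo_ae_eq_Icc).symm
  let H1 : Set (ℝ × ℝ) := {q | q.2 < q.1}
  let H2 : Set (ℝ × ℝ) := {q | -q.2 < q.1}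
  have f1 := k7_fold k7s1 k7s1_mp A H1
    (isOpen_lt (by fun_prop) (by fun_prop)).measurableSet
    (by ext q; simp [A, k7s1_apply]; tauto)
    (by
      have hn : ∀ᵐ q : ℝ × ℝ, ¬ (1 * q.1 + (-1) * q.2 = 0) := by
        rw [ae_iff]; simpa using k7_line_null 1 (-1) one_ne_zero
      filter_upwards [hn] with q hq
      apply propext
      change (k7s1 q).2 < (k7s1 q).1 ↔ ¬ (q.2 < q.1)
      rw [k7s1_apply]
      simp only
      constructor
      · intro h; linarith
      · intro h; rcases lt_or_eq_of_le (not_lt.1 h) with h | h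
        · exact h
        · exact absurd (by linarith) hq)
    G (fun q => h1 q)
  have f2 := k7_fold k7s2 k7s2_mp (A ∩ H1) H2
    (isOpen_lt (by fun_prop) (by fun_prop)).measurableSet
    (by
      ext q; simp only [A, H1, mem_preimage, mem_inter_iff, mem_prod, mem_Ioo, k7s2_apply,
        mem_ofPred_eq]
      constructor
      · rintro ⟨⟨⟨_, _⟩, _, _⟩, _⟩; refine ⟨⟨⟨?_, ?_⟩, ?_, ?_⟩, ?_⟩ <;> linarith
      · rintro ⟨⟨⟨_, _⟩, _, _⟩, _⟩; refine ⟨⟨⟨?_, ?_⟩, ?_, ?_⟩, ?_⟩ <;> linarith)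
    (by
      have hn : ∀ᵐ q : ℝ × ℝ, ¬ (1 * q.1 + 1 * q.2 = 0) := by
        rw [ae_iff]; simpa using k7_line_null 1 1 one_ne_zero
      filter_upwards [hn] with q hq
      apply propext
      change -(k7s2 q).2 < (k7s2 q).1 ↔ ¬ (-q.2 < q.1)
      rw [k7s2_apply]
      simp only
      constructor
      · intro h; linarith
      · intro h; rcases lt_or_eq_of_le (not_lt.1 h) with h | h
        · linarith
        · exact absurd (by linarith) hq)
    G (fun q => h2 q)
  have hT : A ∩ H1 ∩ H2 = k7T := by
    ext q; simp only [A, H1, H2, k7T, mem_inter_iff, mem_prod, mem_Ioo, mem_ofPred_eq]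
    constructor
    · rintro ⟨⟨⟨⟨_, _⟩, _, _⟩, _⟩, _⟩; refine ⟨?_, ?_, ?_⟩ <;> linarith
    · rintro ⟨_, _, _⟩; refine ⟨⟨⟨⟨?_, ?_⟩, ?_, ?_⟩, ?_⟩, ?_⟩ <;> linarith
  rw [hT] at f2
  constructor
  · rw [integrableOn_congr_set_ae hA, f1.1, f2.1]
  · rw [setIntegral_congr_set hA, f1.2, f2.2]; ring

lemma k7_image : k7s '' k7T = omegaDom := by
  ext ⟨u, v⟩
  constructor
  · rintro ⟨⟨x, y⟩, ⟨h1, h2, h3⟩, h⟩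
    simp only [k7s, Prod.mk.injEq] at h h1 h2 h3
    obtain ⟨hu, hv⟩ := h
    have hx : 0 < 1 - x ^ 2 := by nlinarith
    have hy : 0 < 1 - y ^ 2 := by nlinarith
    have hp : 0 < (1 - x ^ 2) * (1 - y ^ 2) := mul_pos hx hy
    set r := Real.sqrt ((1 - x ^ 2) * (1 - y ^ 2)) with hr
    have hr0 : 0 < r := Real.sqrt_pos.2 hp
    have hr2 : r ^ 2 = (1 - x ^ 2) * (1 - y ^ 2) := Real.sq_sqrt hp.le
    have e1 : (1 + x * y) ^ 2 - r ^ 2 = (x + y) ^ 2 := by rw [hr2]; ring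
    have e2 : (1 - x * y) ^ 2 - r ^ 2 = (x - y) ^ 2 := by rw [hr2]; ring
    have p1 : 0 < (x + y) ^ 2 := by apply pow_pos; linarith
    have p2 : 0 < (x - y) ^ 2 := by apply pow_pos; linarith
    have q1 : 0 < 1 + x * y := by nlinarith
    have q2 : 0 < 1 - x * y := by nlinarith
    refine ⟨x * y - r, x * y + r, ?_, by linarith, ?_, ?_⟩
    · have : r < 1 + x * y := by apply lt_of_pow_lt_pow_left₀ 2 q1.le; linarith
      linarith
    · have : r < 1 - x * y := by apply lt_of_pow_lt_pow_left₀ 2 q2.le; linarith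
      linarith
    · simp only [Prod.mk.injEq]
      constructor
      · rw [← hu]; ring
      · rw [← hv]; nlinarith
  · rintro ⟨a, b, ha, hab, hb, h⟩
    simp only [Prod.mk.injEq] at h
    obtain ⟨hu, hv⟩ := h
    have m1 : 0 < (1 + a) * (1 + b) := mul_pos (by linarith) (by linarith)
    have m2 : 0 < (1 - a) * (1 - b) := mul_pos (by linarith) (by linarith)
    set p := Real.sqrt ((1 + a) * (1 + b))
    set r := Real.sqrt ((1 - a) * (1 - b))
    have p0 : 0 < p := Real.sqrt_pos.2 m1
    have r0 : 0 < r := Real.sqrt_pos.2 m2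
    have p2 : p ^ 2 = (1 + a) * (1 + b) := Real.sq_sqrt m1.le
    have r2 : r ^ 2 = (1 - a) * (1 - b) := Real.sq_sqrt m2.le
    have hpr : p * r < 2 - (1 + a * b) := by
      apply lt_of_pow_lt_pow_left₀ 2 (by nlinarith)
      rw [mul_pow, p2, r2]
      nlinarith [pow_pos (sub_pos.2 hab) 2]
    refine ⟨((p + r) / 2, (p - r) / 2), ⟨?_, ?_, ?_⟩, ?_⟩
    · simp only; linarith
    · simp only; linarith
    · simp only
      have : p + r < 2 := by
        apply lt_of_pow_lt_pow_left₀ 2 (by norm_num)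
        nlinarith
      linarith
    · simp only [k7s, Prod.mk.injEq]
      constructor
      · rw [hu]; nlinarith
      · rw [hv]; nlinarith

lemma k7_inj : InjOn k7s k7T := by
  rintro ⟨x, y⟩ ⟨h1, h2, h3⟩ ⟨x', y'⟩ ⟨h1', h2', h3'⟩ h
  simp only [k7s, Prod.mk.injEq] at h h1 h2 h3 h1' h2' h3'
  obtain ⟨hu, hv⟩ := h
  have e1 : x + y = x' + y' := by
    apply (pow_left_inj₀ (by linarith) (by linarith) two_ne_zero).1; nlinarith
  have e2 : x - y = x' - y' := by
    apply (pow_left_inj₀ (by linarith) (by linarith) two_ne_zero).1; nlinarith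
  simp only [Prod.mk.injEq]
  constructor <;> linarith

def k7D (p : ℝ × ℝ) : ℝ × ℝ →L[ℝ] ℝ × ℝ :=
  (Matrix.toLin (.finTwoProd ℝ) (.finTwoProd ℝ)
    !![2 * p.2, 2 * p.1; 2 * p.1, 2 * p.2]).toContinuousLinearMap

lemma k7_hasFDeriv (p : ℝ × ℝ) : HasFDerivAt k7s (k7D p) p := by
  unfold k7D
  rw [Matrix.toLin_finTwoProd_toContinuousLinearMap]
  have h := HasFDerivAt.prodMk (𝕜 := ℝ)
      (((hasFDerivAt_fst (𝕜 := ℝ) (p := p)).const_mul 2).mul (hasFDerivAt_snd (𝕜 := ℝ) (p := p)))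
      ((((hasFDerivAt_fst (𝕜 := ℝ) (p := p)).pow 2).add
        ((hasFDerivAt_snd (𝕜 := ℝ) (p := p)).pow 2)).sub_const 1)
  refine h.congr_fderiv ?_
  ext <;> simp <;> ring

lemma k7_det (p : ℝ × ℝ) : (k7D p).det = 4 * (p.2 ^ 2 - p.1 ^ 2) := by
  unfold k7D
  simp only [LinearMap.det_toContinuousLinearMap, LinearMap.det_toLin, Matrix.det_fin_two_of]
  ring

lemma k7_cov (F : ℝ × ℝ → ℝ) :
    (IntegrableOn F omegaDom ↔
      IntegrableOn (fun q => |4 * (q.2 ^ 2 - q.1 ^ 2)| * F (k7s q)) k7T) ∧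
    (∫ q in omegaDom, F q) = ∫ q in k7T, |4 * (q.2 ^ 2 - q.1 ^ 2)| * F (k7s q) := by
  rw [← k7_image]
  have a := integrableOn_image_iff_integrableOn_abs_det_fderiv_smul volume
    k7T_open.measurableSet (fun x _ => (k7_hasFDeriv x).hasFDerivWithinAt) k7_inj F
  have b := integral_image_eq_integral_abs_det_fderiv_smul volume
    k7T_open.measurableSet (fun x _ => (k7_hasFDeriv x).hasFDerivWithinAt) k7_inj F
  simp only [k7_det, smul_eq_mul] at a b
  exact ⟨a, b⟩

/-! ### Algebra: decomposition of polynomials -/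

def k7M : Fin 4 → MvPolynomial (Fin 2) ℝ :=
  ![1, MvPolynomial.X 0 ^ 2 - MvPolynomial.X 1 ^ 2, MvPolynomial.X 0 + MvPolynomial.X 1,
    MvPolynomial.X 0 - MvPolynomial.X 1]

def k7d : Fin 4 → ℕ := ![0, 2, 1, 1]

lemma k7_qs_mul (P Q : MvPolynomial (Fin 2) ℝ) : quadSub (P * Q) = quadSub P * quadSub Q :=
  map_mul _ _ _
lemma k7_qs_add (P Q : MvPolynomial (Fin 2) ℝ) : quadSub (P + Q) = quadSub P + quadSub Q :=
  map_add _ _ _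
lemma k7_qs_sub (P Q : MvPolynomial (Fin 2) ℝ) : quadSub (P - Q) = quadSub P - quadSub Q :=
  map_sub _ _ _
lemma k7_qs_zero : quadSub 0 = 0 := map_zero _
lemma k7_qs_one : quadSub 1 = 1 := map_one _
lemma k7_qs_C (c : ℝ) : quadSub (MvPolynomial.C c) = MvPolynomial.C c := by
  simp [quadSub]
lemma k7_qs_X0 : quadSub (MvPolynomial.X 0) = 2 * MvPolynomial.X 0 * MvPolynomial.X 1 := by
  simp [quadSub]
lemma k7_qs_X1 : quadSub (MvPolynomial.X 1) =
    MvPolynomial.X 0 ^ 2 + MvPolynomial.X 1 ^ 2 - 1 := by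
  simp [quadSub]

def k7plus : MvPolynomial (Fin 2) ℝ := 1 + MvPolynomial.X 0 + MvPolynomial.X 1
def k7minus : MvPolynomial (Fin 2) ℝ := 1 - MvPolynomial.X 0 + MvPolynomial.X 1

lemma k7_qs_plus : quadSub k7plus = (MvPolynomial.X 0 + MvPolynomial.X 1) ^ 2 := by
  rw [k7plus, k7_qs_add, k7_qs_add, k7_qs_one, k7_qs_X0, k7_qs_X1]; ring
lemma k7_qs_minus : quadSub k7minus = (MvPolynomial.X 0 - MvPolynomial.X 1) ^ 2 := by
  rw [k7minus, k7_qs_add, k7_qs_sub, k7_qs_one, k7_qs_X0, k7_qs_X1]; ring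

lemma k7_deg_lin (c : ℝ) :
    (1 + MvPolynomial.C c * MvPolynomial.X 0 + MvPolynomial.X 1 :
      MvPolynomial (Fin 2) ℝ).totalDegree ≤ 1 := by
  refine (MvPolynomial.totalDegree_add _ _).trans (max_le ?_ (by simp))
  refine (MvPolynomial.totalDegree_add _ _).trans (max_le (by simp) ?_)
  exact (MvPolynomial.totalDegree_mul _ _).trans (by simp)

lemma k7_deg_plus : k7plus.totalDegree ≤ 1 := by
  have := k7_deg_lin 1
  simpa [k7plus] using this

lemma k7_deg_minus : k7minus.totalDegree ≤ 1 := by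
  have := k7_deg_lin (-1)
  simpa [k7minus, sub_eq_add_neg] using this

def k7Dec (m : ℕ) (R : MvPolynomial (Fin 2) ℝ) : Prop :=
  ∃ r : Fin 4 → MvPolynomial (Fin 2) ℝ, R = ∑ e, k7M e * quadSub (r e) ∧
    ∀ e, r e = 0 ∨ 2 * (r e).totalDegree + k7d e ≤ m

lemma k7Dec_add {m : ℕ} {R S : MvPolynomial (Fin 2) ℝ} (hR : k7Dec m R) (hS : k7Dec m S) :
    k7Dec m (R + S) := by
  obtain ⟨r, h1, h2⟩ := hR
  obtain ⟨s, h3, h4⟩ := hS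
  refine ⟨fun e => r e + s e, ?_, fun e => ?_⟩
  · rw [h1, h3, ← Finset.sum_add_distrib]
    exact Finset.sum_congr rfl fun e _ => by rw [k7_qs_add, mul_add]
  · rcases h2 e with h | h
    · rcases h4 e with h' | h'
      · left; simp [h, h']
      · right; simpa [h] using h'
    · rcases h4 e with h' | h'
      · right; simpa [h'] using h
      · right
        have := MvPolynomial.totalDegree_add (r e) (s e)
        rcases le_max_iff.1 this with h5 | h5 <;> dsimp only <;> omega

lemma k7Dec_C {m : ℕ} {R : MvPolynomial (Fin 2) ℝ} (c : ℝ) (hR : k7Dec m R) :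
    k7Dec m (MvPolynomial.C c * R) := by
  obtain ⟨r, h1, h2⟩ := hR
  refine ⟨fun e => MvPolynomial.C c * r e, ?_, fun e => ?_⟩
  · rw [h1, Finset.mul_sum]
    exact Finset.sum_congr rfl fun e _ => by rw [k7_qs_mul, k7_qs_C]; ring
  · rcases h2 e with h | h
    · left; simp [h]
    · right
      have := MvPolynomial.totalDegree_mul (MvPolynomial.C c) (r e)
      rw [MvPolynomial.totalDegree_C] at this
      dsimp only; omega

lemma k7_dm {P L : MvPolynomial (Fin 2) ℝ} (hL : L.totalDegree ≤ 1) {a b m : ℕ}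
    (h : P = 0 ∨ 2 * P.totalDegree + a ≤ m) (hab : b + 1 ≤ a) :
    L * P = 0 ∨ 2 * (L * P).totalDegree + b ≤ m + 1 := by
  rcases h with h | h
  · left; simp [h]
  · right
    have := MvPolynomial.totalDegree_mul L P
    omega

lemma k7_dm' {P : MvPolynomial (Fin 2) ℝ} {a b m : ℕ}
    (h : P = 0 ∨ 2 * P.totalDegree + a ≤ m) (hab : b ≤ a + 1) :
    P = 0 ∨ 2 * P.totalDegree + b ≤ m + 1 := by
  rcases h with h | h
  · left; exact h
  · right; omega

lemma k7Dec_plus {m : ℕ} {R : MvPolynomial (Fin 2) ℝ} (hR : k7Dec m R) :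
    k7Dec (m + 1) ((MvPolynomial.X 0 + MvPolynomial.X 1) * R) := by
  obtain ⟨r, h1, h2⟩ := hR
  refine ⟨![k7plus * r 2, r 3, r 0, k7plus * r 1], ?_, fun e => ?_⟩
  · rw [h1]
    simp only [Fin.sum_univ_four, k7M, k7_qs_mul, k7_qs_plus, Matrix.cons_val]
    ring
  · fin_cases e
    · exact k7_dm k7_deg_plus (h2 2) (by simp [k7d])
    · exact k7_dm' (h2 3) (by simp [k7d])
    · exact k7_dm' (h2 0) (by simp [k7d])
    · exact k7_dm k7_deg_plus (h2 1) (by simp [k7d])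

lemma k7Dec_minus {m : ℕ} {R : MvPolynomial (Fin 2) ℝ} (hR : k7Dec m R) :
    k7Dec (m + 1) ((MvPolynomial.X 0 - MvPolynomial.X 1) * R) := by
  obtain ⟨r, h1, h2⟩ := hR
  refine ⟨![k7minus * r 3, r 2, k7minus * r 1, r 0], ?_, fun e => ?_⟩
  · rw [h1]
    simp only [Fin.sum_univ_four, k7M, k7_qs_mul, k7_qs_minus, Matrix.cons_val]
    ring
  · fin_cases e
    · exact k7_dm k7_deg_minus (h2 3) (by simp [k7d])
    · exact k7_dm' (h2 2) (by simp [k7d])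
    · exact k7_dm k7_deg_minus (h2 1) (by simp [k7d])
    · exact k7_dm' (h2 0) (by simp [k7d])

lemma k7_half : (MvPolynomial.C (1/2 : ℝ) : MvPolynomial (Fin 2) ℝ) * 2 = 1 := by
  have : (2 : MvPolynomial (Fin 2) ℝ) = MvPolynomial.C (2 : ℝ) :=
    (map_ofNat MvPolynomial.C 2).symm
  rw [this, ← MvPolynomial.C_mul]; norm_num

lemma k7Dec_X0 {m : ℕ} {R : MvPolynomial (Fin 2) ℝ} (hR : k7Dec m R) :
    k7Dec (m + 1) (MvPolynomial.X 0 * R) := by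
  have := k7Dec_C (1/2) (k7Dec_add (k7Dec_plus hR) (k7Dec_minus hR))
  convert this using 1
  linear_combination (- MvPolynomial.X 0 * R) * k7_half

lemma k7Dec_X1 {m : ℕ} {R : MvPolynomial (Fin 2) ℝ} (hR : k7Dec m R) :
    k7Dec (m + 1) (MvPolynomial.X 1 * R) := by
  have := k7Dec_C (1/2) (k7Dec_add (k7Dec_plus hR) (k7Dec_C (-1) (k7Dec_minus hR)))
  convert this using 1
  simp only [map_neg, map_one]
  linear_combination (- MvPolynomial.X 1 * R) * k7_half

lemma k7Dec_mono {m m' : ℕ} {R : MvPolynomial (Fin 2) ℝ} (hR : k7Dec m R) (h : m ≤ m') :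
    k7Dec m' R := by
  obtain ⟨r, h1, h2⟩ := hR
  exact ⟨r, h1, fun e => (h2 e).imp id (fun h3 => h3.trans h)⟩

lemma k7Dec_zero (m : ℕ) : k7Dec m 0 :=
  ⟨fun _ => 0, by simp [k7_qs_zero], fun _ => Or.inl rfl⟩

lemma k7Dec_one : k7Dec 0 1 := by
  refine ⟨![1, 0, 0, 0], ?_, fun e => ?_⟩
  · simp [Fin.sum_univ_four, k7M, k7_qs_zero, k7_qs_one]
  · fin_cases e <;> simp [k7d]

lemma k7Dec_mon (i j : ℕ) : k7Dec (i + j) (MvPolynomial.X 0 ^ i * MvPolynomial.X 1 ^ j) := by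
  induction i with
  | zero =>
    induction j with
    | zero => simpa using k7Dec_one
    | succ j ih =>
      have := k7Dec_X1 ih
      rw [pow_succ', mul_left_comm]
      exact this
  | succ i ih =>
    have := k7Dec_mono (k7Dec_X0 ih) (m' := i + 1 + j) (by omega)
    convert this using 1
    ring

lemma k7_mon_eq (d : Fin 2 →₀ ℕ) (c : ℝ) : MvPolynomial.monomial d c =
    MvPolynomial.C c * (MvPolynomial.X 0 ^ d 0 * MvPolynomial.X 1 ^ d 1) := by
  rw [MvPolynomial.monomial_eq, Finsupp.prod_fintype _ _ (by simp), Fin.prod_univ_two]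

lemma k7_mon_deg {P : MvPolynomial (Fin 2) ℝ} {d : Fin 2 →₀ ℕ} (hd : d ∈ P.support) :
    d 0 + d 1 ≤ P.totalDegree := by
  have := MvPolynomial.le_totalDegree hd
  rwa [Finsupp.sum_fintype _ _ (by simp), Fin.sum_univ_two] at this

lemma k7_dec (R : MvPolynomial (Fin 2) ℝ) : k7Dec R.totalDegree R := by
  have key : ∀ s : Finset (Fin 2 →₀ ℕ), s ⊆ R.support →
      k7Dec R.totalDegree (∑ d ∈ s, MvPolynomial.monomial d (R.coeff d)) := by
    intro s
    induction s using Finset.induction_on with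
    | empty => intro _; simpa using k7Dec_zero _
    | insert d s hd ih =>
      intro hs
      rw [Finset.sum_insert hd]
      refine k7Dec_add ?_ (ih fun x hx => hs (Finset.mem_insert_of_mem hx))
      rw [k7_mon_eq]
      exact k7Dec_C _ (k7Dec_mono (k7Dec_mon _ _) (k7_mon_deg (hs (Finset.mem_insert_self _ _))))
  have := key R.support subset_rfl
  rwa [← MvPolynomial.as_sum] at this

lemma k7_deg_qs (P : MvPolynomial (Fin 2) ℝ) : (quadSub P).totalDegree ≤ 2 * P.totalDegree := by
  have h0 : (quadSub (MvPolynomial.X 0)).totalDegree ≤ 2 := by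
    rw [k7_qs_X0]
    refine (MvPolynomial.totalDegree_mul _ _).trans ?_
    have := MvPolynomial.totalDegree_mul (2 : MvPolynomial (Fin 2) ℝ) (MvPolynomial.X 0)
    have h2 : (2 : MvPolynomial (Fin 2) ℝ).totalDegree = 0 := by
      have : (2 : MvPolynomial (Fin 2) ℝ) = MvPolynomial.C (2 : ℝ) :=
    (map_ofNat MvPolynomial.C 2).symm
      rw [this, MvPolynomial.totalDegree_C]
    rw [h2, MvPolynomial.totalDegree_X] at this
    rw [MvPolynomial.totalDegree_X]; omega
  have h1 : (quadSub (MvPolynomial.X 1)).totalDegree ≤ 2 := by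
    rw [k7_qs_X1]
    refine (MvPolynomial.totalDegree_sub _ _).trans (max_le ?_ (by simp))
    refine (MvPolynomial.totalDegree_add _ _).trans (max_le ?_ ?_) <;> simp
  conv_lhs => rw [MvPolynomial.as_sum P]
  have : quadSub (∑ d ∈ P.support, MvPolynomial.monomial d (P.coeff d)) =
      ∑ d ∈ P.support, quadSub (MvPolynomial.monomial d (P.coeff d)) := map_sum _ _ _
  rw [this]
  apply MvPolynomial.totalDegree_finsetSum_le
  intro d hd
  have hpow : ∀ (i : Fin 2) n, quadSub (MvPolynomial.X i ^ n) = quadSub (MvPolynomial.X i) ^ n :=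
    fun i n => map_pow _ _ _
  rw [k7_mon_eq, k7_qs_mul, k7_qs_mul, k7_qs_C, hpow, hpow]
  have hd' := k7_mon_deg hd
  have e1 := MvPolynomial.totalDegree_mul (MvPolynomial.C (P.coeff d))
    (quadSub (MvPolynomial.X 0) ^ d 0 * quadSub (MvPolynomial.X 1) ^ d 1)
  have e2 := MvPolynomial.totalDegree_mul (quadSub (MvPolynomial.X 0) ^ d 0)
    (quadSub (MvPolynomial.X 1) ^ d 1)
  have e3 := MvPolynomial.totalDegree_pow (quadSub (MvPolynomial.X 0)) (d 0)
  have e4 := MvPolynomial.totalDegree_pow (quadSub (MvPolynomial.X 1)) (d 1)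
  have e5 := Nat.mul_le_mul_left (d 0) h0
  have e6 := Nat.mul_le_mul_left (d 1) h1
  rw [MvPolynomial.totalDegree_C] at e1
  omega

lemma k7_deg_M (e : Fin 4) : (k7M e).totalDegree ≤ k7d e := by
  fin_cases e
  · simp [k7M, k7d]
  · simp only [k7M, k7d, Fin.mk_one, Matrix.cons_val]
    refine (MvPolynomial.totalDegree_sub _ _).trans (max_le ?_ ?_) <;> simp
  · simp only [k7M, k7d, Fin.reduceFinMk, Matrix.cons_val]
    refine (MvPolynomial.totalDegree_add _ _).trans (max_le ?_ ?_) <;> simp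
  · simp only [k7M, k7d, Fin.reduceFinMk, Matrix.cons_val]
    refine (MvPolynomial.totalDegree_sub _ _).trans (max_le ?_ ?_) <;> simp

lemma k7_deg_le (e : Fin 4) (P : MvPolynomial (Fin 2) ℝ) :
    (k7M e * quadSub P).totalDegree ≤ 2 * P.totalDegree + k7d e := by
  have := MvPolynomial.totalDegree_mul (k7M e) (quadSub P)
  have := k7_deg_qs P
  have := k7_deg_M e
  omega

/-! ### Evaluation, integrability and positivity -/

lemma k7_ev_mul (P Q : MvPolynomial (Fin 2) ℝ) (q : ℝ × ℝ) :
    evalP (P * Q) q = evalP P q * evalP Q q := map_mul _ _ _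
lemma k7_ev_add (P Q : MvPolynomial (Fin 2) ℝ) (q : ℝ × ℝ) :
    evalP (P + Q) q = evalP P q + evalP Q q := map_add _ _ _
lemma k7_ev_sub (P Q : MvPolynomial (Fin 2) ℝ) (q : ℝ × ℝ) :
    evalP (P - Q) q = evalP P q - evalP Q q := map_sub _ _ _
lemma k7_ev_C (c : ℝ) (q : ℝ × ℝ) : evalP (MvPolynomial.C c) q = c := by simp [evalP]
lemma k7_ev_plus (q : ℝ × ℝ) : evalP k7plus q = 1 + q.1 + q.2 := by simp [evalP, k7plus]
lemma k7_ev_minus (q : ℝ × ℝ) : evalP k7minus q = 1 - q.1 + q.2 := by simp [evalP, k7minus]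
lemma k7_ev_qs (P : MvPolynomial (Fin 2) ℝ) (q : ℝ × ℝ) :
    evalP (quadSub P) q = evalP P (k7s q) := by
  unfold evalP quadSub k7s
  induction P using MvPolynomial.induction_on with
  | C a => simp
  | add p q hp hq => simp only [map_add, hp, hq]
  | mul_X p i hp =>
    simp only [map_mul, hp]
    congr 1
    fin_cases i <;> simp

lemma k7_ev_cont (P : MvPolynomial (Fin 2) ℝ) : Continuous (evalP P) := by
  unfold evalP
  refine (MvPolynomial.continuous_eval P).comp ?_
  refine continuous_pi fun i => ?_
  fin_cases i
  · exact continuous_fst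
  · exact continuous_snd

lemma k7_om_meas : MeasurableSet omegaDom := by
  rw [← k7_image]
  exact measurable_image_of_fderivWithin k7T_open.measurableSet
    (fun x _ => (k7_hasFDeriv x).hasFDerivWithinAt) k7_inj

lemma k7_om_pos {q : ℝ × ℝ} (h : q ∈ omegaDom) :
    0 < 1 - q.1 + q.2 ∧ 0 < 1 + q.1 + q.2 ∧ 0 < q.1 ^ 2 - 4 * q.2 := by
  obtain ⟨x, y, hx, hxy, hy, rfl⟩ := h
  refine ⟨?_, ?_, ?_⟩
  · have : 0 < (1 - x) * (1 - y) := mul_pos (by linarith) (by linarith)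
    simp only; linarith
  · have : 0 < (1 + x) * (1 + y) := mul_pos (by linarith) (by linarith)
    simp only; linarith
  · have : 0 < (y - x) ^ 2 := pow_pos (by linarith) 2
    simp only; linarith

lemma k7_int_om {W : ℝ × ℝ → ℝ} (hW : IntegrableOn W omegaDom) (P : MvPolynomial (Fin 2) ℝ) :
    IntegrableOn (fun q => evalP P q * W q) omegaDom := by
  have hK : IsCompact (Icc (-2 : ℝ) 2 ×ˢ Icc (-1 : ℝ) 1) := isCompact_Icc.prod isCompact_Icc
  refine hW.continuousOn_mul_of_subset (k7_ev_cont P).continuousOn hK k7_om_meas ?_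
  rintro q ⟨x, y, hx, hxy, hy, rfl⟩
  refine ⟨⟨?_, ?_⟩, ?_, ?_⟩ <;> simp only <;> nlinarith

lemma k7_int_sq {W : ℝ × ℝ → ℝ} (hW : IntegrableOn W sqDom) (P : MvPolynomial (Fin 2) ℝ) :
    IntegrableOn (fun q => evalP P q * W q) sqDom :=
  hW.continuousOn_mul (k7_ev_cont P).continuousOn (isCompact_Icc.prod isCompact_Icc)

lemma k7_box : (Ioo (-0.1 : ℝ) 0.1 ×ˢ Ioo (-0.3 : ℝ) (-0.2)) ⊆ omegaDom := by
  rintro ⟨u, v⟩ ⟨⟨h1, h2⟩, h3, h4⟩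
  simp only at h1 h2 h3 h4
  have hp : 0 < u ^ 2 - 4 * v := by nlinarith
  have hs := Real.sq_sqrt hp.le
  have hs0 := Real.sqrt_pos.2 hp
  set r := Real.sqrt (u ^ 2 - 4 * v)
  have hr : r < 1.2 := by
    apply lt_of_pow_lt_pow_left₀ 2 (by norm_num)
    rw [hs]; nlinarith
  refine ⟨(u - r) / 2, (u + r) / 2, by linarith, by linarith, by linarith, ?_⟩
  simp only [Prod.mk.injEq]
  constructor
  · ring
  · nlinarith

lemma k7_posdef {W : ℝ × ℝ → ℝ} (hW : IntegrableOn W omegaDom) (hpos : ∀ q ∈ omegaDom, 0 < W q)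
    (P : MvPolynomial (Fin 2) ℝ) (h : (∫ q in omegaDom, evalP P q * evalP P q * W q) = 0) :
    P = 0 := by
  have hi : IntegrableOn (fun q => evalP P q * evalP P q * W q) omegaDom := by
    have := k7_int_om hW (P * P)
    simpa only [k7_ev_mul] using this
  have hnn : 0 ≤ᵐ[volume.restrict omegaDom] fun q => evalP P q * evalP P q * W q := by
    filter_upwards [ae_restrict_mem k7_om_meas] with q hq
    exact mul_nonneg (mul_self_nonneg _) (hpos q hq).le
  have h0 := (setIntegral_eq_zero_iff_of_nonneg_ae hnn hi).1 h
  have h1 : evalP P =ᵐ[volume.restrict omegaDom] fun _ => (0 : ℝ) := by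
    filter_upwards [h0, ae_restrict_mem k7_om_meas] with q hq hm
    have := (hpos q hm).ne'
    simp only [Pi.zero_apply, mul_eq_zero, or_self] at hq
    exact hq.resolve_right this
  have h2 : evalP P =ᵐ[volume.restrict (Ioo (-0.1 : ℝ) 0.1 ×ˢ Ioo (-0.3 : ℝ) (-0.2))]
      fun _ => (0 : ℝ) := ae_restrict_of_ae_restrict_of_subset k7_box h1
  have h3 := Measure.eqOn_open_of_ae_eq h2 (isOpen_Ioo.prod isOpen_Ioo)
    (k7_ev_cont P).continuousOn continuousOn_const
  refine MvPolynomial.funext_set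
    (s := ![Ioo (-0.1 : ℝ) 0.1, Ioo (-0.3 : ℝ) (-0.2)]) ?_ ?_
  · intro i
    fin_cases i
    · exact Ioo_infinite (by norm_num)
    · exact Ioo_infinite (by norm_num)
  · intro x hx
    have a0 := hx 0 (mem_univ _)
    have a1 := hx 1 (mem_univ _)
    have := h3 (x := (x 0, x 1)) ⟨a0, a1⟩
    simp only [evalP] at this
    have hx' : x = ![x 0, x 1] := by
      ext i; fin_cases i <;> rfl
    rw [map_zero, hx']
    exact this

/-! ### The abstract orthogonality argument -/

structure K7Hyp (CW : ℝ × ℝ → ℝ) (W : Fin 4 → ℝ × ℝ → ℝ) (κ : Fin 4 → ℝ) : Prop where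
  hI : IntegrableOn CW sqDom
  hWI : ∀ e, IntegrableOn (W e) omegaDom
  hWp : ∀ e, ∀ q ∈ omegaDom, 0 < W e q
  hk : ∀ e, 0 < κ e
  hB : ∀ e f P R, (∫ q in sqDom, evalP (k7M e * quadSub P) q * evalP (k7M f * quadSub R) q * CW q)
    = if e = f then κ e * ∫ q in omegaDom, evalP P q * evalP R q * W e q else 0

lemma k7_ev_sum (g : Fin 4 → MvPolynomial (Fin 2) ℝ) (q : ℝ × ℝ) :
    evalP (∑ e, g e) q = ∑ e, evalP (g e) q := map_sum _ _ _

lemma k7_inner {CW : ℝ × ℝ → ℝ} {W : Fin 4 → ℝ × ℝ → ℝ} {κ : Fin 4 → ℝ} (H : K7Hyp CW W κ)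
    (r : Fin 4 → MvPolynomial (Fin 2) ℝ) (f : Fin 4) (S : MvPolynomial (Fin 2) ℝ) :
    (∫ q in sqDom, evalP (∑ e, k7M e * quadSub (r e)) q * evalP (k7M f * quadSub S) q * CW q)
      = κ f * ∫ q in omegaDom, evalP (r f) q * evalP S q * W f q := by
  have : ∀ q, evalP (∑ e, k7M e * quadSub (r e)) q * evalP (k7M f * quadSub S) q * CW q
      = ∑ e, evalP (k7M e * quadSub (r e)) q * evalP (k7M f * quadSub S) q * CW q := by
    intro q
    rw [k7_ev_sum, Finset.sum_mul, Finset.sum_mul]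
  simp only [this]
  rw [integral_finsetSum]
  · simp only [H.hB]
    simp
  · intro e _
    have := k7_int_sq H.hI ((k7M e * quadSub (r e)) * (k7M f * quadSub S))
    rw [IntegrableOn] at this
    simpa only [k7_ev_mul _ _, mul_assoc] using this

lemma k7_uniq {CW : ℝ × ℝ → ℝ} {W : Fin 4 → ℝ × ℝ → ℝ} {κ : Fin 4 → ℝ} (H : K7Hyp CW W κ)
    (r : Fin 4 → MvPolynomial (Fin 2) ℝ) (h : ∑ e, k7M e * quadSub (r e) = 0) (f : Fin 4) :
    r f = 0 := by
  have := k7_inner H r f (r f)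
  rw [h] at this
  have h0 : ∀ q, evalP 0 q = 0 := fun q => map_zero _
  simp only [h0, zero_mul, integral_zero] at this
  refine k7_posdef (H.hWI f) (H.hWp f) _ ?_
  exact (mul_eq_zero.1 this.symm).resolve_left (H.hk f).ne'

lemma k7_deg_eq {CW : ℝ × ℝ → ℝ} {W : Fin 4 → ℝ × ℝ → ℝ} {κ : Fin 4 → ℝ} (H : K7Hyp CW W κ)
    (e : Fin 4) (P : MvPolynomial (Fin 2) ℝ) (hP : P ≠ 0) :
    (k7M e * quadSub P).totalDegree = 2 * P.totalDegree + k7d e := by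
  refine le_antisymm (k7_deg_le e P) ?_
  obtain ⟨r, h1, h2⟩ := k7_dec (k7M e * quadSub P)
  have h3 : ∑ f, k7M f * quadSub (r f - if f = e then P else 0) = 0 := by
    simp only [k7_qs_sub, mul_sub, Finset.sum_sub_distrib, ← h1]
    rw [Finset.sum_eq_single e]
    · simp
    · intro b _ hb; simp [hb, k7_qs_zero]
    · simp
  have h4 := k7_uniq H _ h3 e
  simp only [if_true, sub_eq_zero] at h4
  rcases h2 e with h | h
  · exact absurd (h4.symm.trans h) hP
  · rwa [h4] at h

/-- membership of the lifted polynomials -/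
lemma k7_mem {CW : ℝ × ℝ → ℝ} {W : Fin 4 → ℝ × ℝ → ℝ} {κ : Fin 4 → ℝ} (H : K7Hyp CW W κ)
    (e : Fin 4) (P : MvPolynomial (Fin 2) ℝ) (hP : P ≠ 0) (c : ℝ) (hc : c ≠ 0) (n N : ℕ)
    (hN : N = 2 * n + k7d e) (hV : P ∈ Vpoly omegaDom (W e) n) :
    MvPolynomial.C c * (k7M e * quadSub P) ∈ Vpoly sqDom CW N := by
  obtain ⟨hd, ho⟩ := hV
  constructor
  · have hC : MvPolynomial.C c * (k7M e * quadSub P) =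
        k7M e * quadSub (MvPolynomial.C c * P) := by rw [k7_qs_mul, k7_qs_C]; ring
    have hC0 : (MvPolynomial.C c : MvPolynomial (Fin 2) ℝ) ≠ 0 := by simpa using hc
    rw [hC, k7_deg_eq H e _ (mul_ne_zero hC0 hP),
      MvPolynomial.totalDegree_mul_of_isDomain hC0 hP, MvPolynomial.totalDegree_C, hd, hN]
    omega
  · intro R hR
    obtain ⟨r, h1, h2⟩ := k7_dec R
    have h3 := k7_inner H r e P
    rw [← h1] at h3
    have h4 : (∫ q in omegaDom, evalP (r e) q * evalP P q * W e q) = 0 := by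
      rcases h2 e with h | h
      · have h0 : ∀ q, evalP 0 q = 0 := fun q => map_zero _
        simp [h, h0]
      · rw [← ho (r e) (by omega)]
        simp only [mul_comm]
    rw [h4, mul_zero] at h3
    have : ∀ q, evalP (MvPolynomial.C c * (k7M e * quadSub P)) q * evalP R q * CW q
        = c * (evalP R q * evalP (k7M e * quadSub P) q * CW q) := by
      intro q
      rw [k7_ev_mul, k7_ev_C]; ring
    simp only [this]
    rw [integral_const_mul, h3, mul_zero]

lemma k7_orth {CW : ℝ × ℝ → ℝ} {W : Fin 4 → ℝ × ℝ → ℝ} {κ : Fin 4 → ℝ} (H : K7Hyp CW W κ)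
    (e f : Fin 4) (P R : MvPolynomial (Fin 2) ℝ) (c d : ℝ) :
    (∫ q in sqDom, evalP (MvPolynomial.C c * (k7M e * quadSub P)) q *
      evalP (MvPolynomial.C d * (k7M f * quadSub R)) q * CW q) =
    if e = f then c * d * κ e * ∫ q in omegaDom, evalP P q * evalP R q * W e q else 0 := by
  have : ∀ q, evalP (MvPolynomial.C c * (k7M e * quadSub P)) q *
      evalP (MvPolynomial.C d * (k7M f * quadSub R)) q * CW q
      = (c * d) * (evalP (k7M e * quadSub P) q * evalP (k7M f * quadSub R) q * CW q) := by
    intro q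
    rw [k7_ev_mul, k7_ev_mul (MvPolynomial.C d), k7_ev_C, k7_ev_C]; ring
  simp only [this]
  rw [integral_const_mul, H.hB]
  split_ifs <;> ring

/-- components of an element of `V_N` -/
lemma k7_comp {CW : ℝ × ℝ → ℝ} {W : Fin 4 → ℝ × ℝ → ℝ} {κ : Fin 4 → ℝ} (H : K7Hyp CW W κ)
    (N : ℕ) (R : MvPolynomial (Fin 2) ℝ) (hR : R ∈ Vpoly sqDom CW N) :
    ∃ r : Fin 4 → MvPolynomial (Fin 2) ℝ, R = ∑ e, k7M e * quadSub (r e) ∧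
      ∀ e, r e = 0 ∨ (2 * (r e).totalDegree + k7d e = N ∧
        r e ∈ Vpoly omegaDom (W e) (r e).totalDegree) := by
  obtain ⟨hd, ho⟩ := hR
  obtain ⟨r, h1, h2⟩ := k7_dec R
  refine ⟨r, h1, fun e => ?_⟩
  have key : ∀ S : MvPolynomial (Fin 2) ℝ, 2 * S.totalDegree + k7d e < N →
      (∫ q in omegaDom, evalP (r e) q * evalP S q * W e q) = 0 := by
    intro S hS
    have h3 := k7_inner H r e S
    rw [← h1, ho _ (lt_of_le_of_lt (k7_deg_le e S) hS)] at h3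
    exact (mul_eq_zero.1 h3.symm).resolve_left (H.hk e).ne'
  rcases h2 e with h | h
  · exact Or.inl h
  · rw [hd] at h
    rcases lt_or_eq_of_le h with h | h
    · exact Or.inl (k7_posdef (H.hWI e) (H.hWp e) _ (key _ h))
    · refine Or.inr ⟨h, rfl, fun Q hQ => key Q (by omega)⟩

lemma k7_span (e : Fin 4) (p : ℕ → MvPolynomial (Fin 2) ℝ) (c : ℝ) (hc : c ≠ 0)
    (I : Set ℕ) (r : MvPolynomial (Fin 2) ℝ) (hr : r ∈ Submodule.span ℝ (p '' I))
    (T : Submodule ℝ (MvPolynomial (Fin 2) ℝ))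
    (hT : ∀ k ∈ I, MvPolynomial.C c * (k7M e * quadSub (p k)) ∈ T) :
    k7M e * quadSub r ∈ T := by
  induction hr using Submodule.span_induction with
  | mem x hx =>
    obtain ⟨k, hk, rfl⟩ := hx
    have := T.smul_mem c⁻¹ (hT k hk)
    rw [MvPolynomial.smul_eq_C_mul, ← mul_assoc, ← MvPolynomial.C_mul, inv_mul_cancel₀ hc,
      MvPolynomial.C_1, one_mul] at this
    exact this
  | zero => rw [k7_qs_zero, mul_zero]; exact T.zero_mem
  | add x y _ _ hx hy => rw [k7_qs_add, mul_add]; exact T.add_mem hx hy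
  | smul a x _ hx =>
    have := T.smul_mem a hx
    rw [MvPolynomial.smul_eq_C_mul] at this ⊢
    rw [k7_qs_mul, k7_qs_C]
    convert this using 1
    ring

lemma k7_onb_ne {D : Set (ℝ × ℝ)} {W : ℝ × ℝ → ℝ} {n : ℕ} {Q : ℕ → MvPolynomial (Fin 2) ℝ}
    (h : isONBVn D W n Q) (k : ℕ) (hk : k ≤ n) : Q k ≠ 0 := by
  intro h0
  have := h.2.1 k hk k hk
  have hz : ∀ q, evalP 0 q = 0 := fun q => map_zero _
  simp [h0, hz] at this

/-- Two active slots `e`, `f`. `L` is the number of elements in the second slot. -/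
lemma k7_onb {CW : ℝ × ℝ → ℝ} {W : Fin 4 → ℝ × ℝ → ℝ} {κ : Fin 4 → ℝ} (H : K7Hyp CW W κ)
    (e f : Fin 4) (hef : e ≠ f) (N n L : ℕ) (hNe : N = 2 * n + k7d e)
    (hNf : ∀ d, N = 2 * d + k7d f ↔ d + 1 = L) (hNL : N = n + L)
    (hoth : ∀ g, g ≠ e → g ≠ f → ∀ d, N ≠ 2 * d + k7d g)
    (c d : ℝ) (hc : c * c * κ e = 1) (hd : d * d * κ f = 1)
    (p s : ℕ → MvPolynomial (Fin 2) ℝ) (hp : isONBVn omegaDom (W e) n p)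
    (hs : 0 < L → isONBVn omegaDom (W f) (L - 1) s) :
    isONBVn sqDom CW N (fun k => if k ≤ n then MvPolynomial.C c * (k7M e * quadSub (p k))
      else MvPolynomial.C d * (k7M f * quadSub (s (k - n - 1)))) := by
  have hc0 : c ≠ 0 := by rintro rfl; simp at hc
  have hd0 : d ≠ 0 := by rintro rfl; simp at hd
  refine ⟨fun k hk => ?_, fun k hk j hj => ?_, fun R hR => ?_⟩
  · dsimp only
    split_ifs with h
    · exact k7_mem H e _ (k7_onb_ne hp k h) c hc0 n N hNe (hp.1 k h)
    · have hL : 0 < L := by omega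
      have hk' : k - n - 1 ≤ L - 1 := by omega
      exact k7_mem H f _ (k7_onb_ne (hs hL) _ hk') d hd0 (L - 1) N
        ((hNf _).2 (by omega)) ((hs hL).1 _ hk')
  · dsimp only
    by_cases h : k ≤ n <;> by_cases h' : j ≤ n
    · rw [if_pos h, if_pos h', k7_orth H, if_pos rfl, hc, one_mul]
      exact hp.2.1 k h j h'
    · rw [if_pos h, if_neg h', k7_orth H, if_neg hef, if_neg (by omega)]
    · rw [if_neg h, if_pos h', k7_orth H, if_neg hef.symm, if_neg (by omega)]
    · have hL : 0 < L := by omega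
      rw [if_neg h, if_neg h', k7_orth H, if_pos rfl, hd, one_mul,
        (hs hL).2.1 (k - n - 1) (by omega) (j - n - 1) (by omega)]
      exact if_congr (by omega) rfl rfl
  · obtain ⟨r, h1, h2⟩ := k7_comp H N R hR
    rw [h1]
    refine Submodule.sum_mem _ fun g _ => ?_
    rcases h2 g with h0 | ⟨h3, h4⟩
    · rw [h0, k7_qs_zero, mul_zero]; exact Submodule.zero_mem _
    · by_cases hge : g = e
      · subst hge
        have hdeg : (r g).totalDegree = n := by omega
        rw [hdeg] at h4
        refine k7_span g p c hc0 (Iic n) (r g) (hp.2.2 _ h4) _ fun k hk => ?_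
        have hk : k ≤ n := hk
        refine Submodule.subset_span ⟨k, (by simp only [mem_Iic]; omega), ?_⟩
        simp [hk]
      · by_cases hgf : g = f
        · subst hgf
          have hdeg := (hNf _).1 h3.symm
          have hL : 0 < L := by omega
          have hdeg' : (r g).totalDegree = L - 1 := by omega
          rw [hdeg'] at h4
          refine k7_span g s d hd0 (Iic (L - 1)) (r g) ((hs hL).2.2 _ h4) _ fun k hk => ?_
          have hk : k ≤ L - 1 := hk
          refine Submodule.subset_span ⟨n + 1 + k, (by simp only [mem_Iic]; omega), ?_⟩
          have e1 : ¬ (n + 1 + k ≤ n) := by omega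
          have e2 : n + 1 + k - n - 1 = k := by omega
          simp only [e1, e2, if_false]
        · exact absurd h3.symm (hoth g hge hgf _)

/-! ### Verification of the hypotheses for the concrete weights -/

lemma k7_odd (e : ℝ × ℝ ≃ᵐ ℝ × ℝ) (hm : MeasurePreserving e volume volume)
    (A : Set (ℝ × ℝ)) (hAe : e ⁻¹' A = A) (g : ℝ × ℝ → ℝ) (hg : ∀ q, g (e q) = - g q) :
    (∫ q in A, g q) = 0 := by
  have := hm.setIntegral_preimage_emb e.measurableEmbedding g A
  rw [hAe] at this
  simp only [hg, integral_neg] at this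
  linarith

lemma k7_odd1 (g : ℝ × ℝ → ℝ) (hg : ∀ q : ℝ × ℝ, g (q.2, q.1) = - g q) :
    (∫ q in sqDom, g q) = 0 :=
  k7_odd k7s1 k7s1_mp _ (by
    ext q; simp only [sqDom, mem_preimage, mem_prod, k7s1_apply]; tauto) g hg

lemma k7_odd2 (g : ℝ × ℝ → ℝ) (hg : ∀ q : ℝ × ℝ, g (-q.2, -q.1) = - g q) :
    (∫ q in sqDom, g q) = 0 := by
  refine k7_odd k7s2 k7s2_mp _ ?_ g hg
  ext q
  simp only [sqDom, mem_preimage, mem_prod, mem_Icc, k7s2_apply]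
  constructor
  · rintro ⟨⟨_, _⟩, _, _⟩; refine ⟨⟨?_, ?_⟩, ?_, ?_⟩ <;> linarith
  · rintro ⟨⟨_, _⟩, _, _⟩; refine ⟨⟨?_, ?_⟩, ?_, ?_⟩ <;> linarith

lemma k7_s1 (q : ℝ × ℝ) : k7s (q.2, q.1) = k7s q := by
  simp only [k7s, Prod.mk.injEq]; constructor <;> ring
lemma k7_s2 (q : ℝ × ℝ) : k7s (-q.2, -q.1) = k7s q := by
  simp only [k7s, Prod.mk.injEq]; constructor <;> ring

/-- the polynomial in `u, v` whose substitution is the square of `k7M e` -/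
def k7m : Fin 4 → MvPolynomial (Fin 2) ℝ := ![1, k7plus * k7minus, k7plus, k7minus]

lemma k7_M_sq (e : Fin 4) : k7M e * k7M e = quadSub (k7m e) := by
  fin_cases e
  · simp [k7M, k7m, k7_qs_one]
  · simp only [k7M, k7m, Fin.mk_one, Matrix.cons_val, k7_qs_mul, k7_qs_plus, k7_qs_minus]; ring
  · simp only [k7M, k7m, Fin.reduceFinMk, Matrix.cons_val, k7_qs_plus]; ring
  · simp only [k7M, k7m, Fin.reduceFinMk, Matrix.cons_val, k7_qs_minus]; ring

lemma k7_weight (α β γ a x y : ℝ) (h : (x, y) ∈ k7T) :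
    4 * (2 * a * (4:ℝ) ^ γ * |x - y| ^ (2*α+1) * |x + y| ^ (2*β+1)
        * (1 - x^2) ^ γ * (1 - y^2) ^ γ) =
    |4 * (y ^ 2 - x ^ 2)| * (2 * a * (1 - 2 * x * y + (x^2 + y^2 - 1)) ^ α *
      (1 + 2 * x * y + (x^2 + y^2 - 1)) ^ β * ((2 * x * y)^2 - 4*(x^2 + y^2 - 1)) ^ γ) := by
  obtain ⟨h1, h2, h3⟩ := h
  simp only at h1 h2 h3
  have p1 : 0 < x - y := by linarith
  have p2 : 0 < x + y := by linarith
  have hx : 0 < 1 - x ^ 2 := by nlinarith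
  have hy : 0 < 1 - y ^ 2 := by nlinarith
  have e1 : 1 - 2 * x * y + (x^2 + y^2 - 1) = (x - y) ^ (2 : ℝ) := by
    rw [Real.rpow_two]; ring
  have e2 : 1 + 2 * x * y + (x^2 + y^2 - 1) = (x + y) ^ (2 : ℝ) := by
    rw [Real.rpow_two]; ring
  have e3 : (2 * x * y)^2 - 4*(x^2 + y^2 - 1) = 4 * (1 - x^2) * (1 - y^2) := by ring
  have e4 : |4 * (y ^ 2 - x ^ 2)| = 4 * (x - y) * (x + y) := by
    rw [abs_of_neg (by nlinarith)]; ring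
  rw [e1, e2, e3, e4, abs_of_pos p1, abs_of_pos p2, ← Real.rpow_mul p1.le, ← Real.rpow_mul p2.le,
    Real.rpow_add_one p1.ne', Real.rpow_add_one p2.ne', Real.mul_rpow (by positivity) hy.le,
    Real.mul_rpow (by norm_num) hx.le]
  ring

lemma k7_main_int {CW Wab : ℝ × ℝ → ℝ} (hs1 : ∀ q, CW (q.2, q.1) = CW q)
    (hs2 : ∀ q, CW (-q.2, -q.1) = CW q)
    (hT : ∀ q ∈ k7T, 4 * CW q = |4 * (q.2 ^ 2 - q.1 ^ 2)| * Wab (k7s q))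
    (P : MvPolynomial (Fin 2) ℝ) :
    (IntegrableOn (fun q => evalP (quadSub P) q * CW q) sqDom ↔
      IntegrableOn (fun q => evalP P q * Wab q) omegaDom) ∧
    (∫ q in sqDom, evalP (quadSub P) q * CW q) = ∫ q in omegaDom, evalP P q * Wab q := by
  have f := k7_sq_fold (fun q => evalP (quadSub P) q * CW q)
    (fun q => by simp only [k7_ev_qs, k7_s1, hs1]) (fun q => by simp only [k7_ev_qs, k7_s2, hs2])
  have g := k7_cov (fun q => evalP P q * Wab q)
  have hq : ∀ q ∈ k7T, |4 * (q.2 ^ 2 - q.1 ^ 2)| * (evalP P (k7s q) * Wab (k7s q))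
      = 4 * (evalP (quadSub P) q * CW q) := by
    intro q hq
    rw [k7_ev_qs]
    linear_combination (- evalP P (k7s q)) * hT q hq
  constructor
  · rw [f.1, g.1, integrableOn_congr_fun hq k7T_open.measurableSet]
    exact (integrable_const_mul_iff (IsUnit.mk0 (4:ℝ) (by norm_num)) _).symm
  · rw [f.2, g.2, setIntegral_congr_fun k7T_open.measurableSet hq, integral_const_mul]

lemma k7_hyp {CW : ℝ × ℝ → ℝ} {W : Fin 4 → ℝ × ℝ → ℝ} {κ : Fin 4 → ℝ}
    (hs1 : ∀ q, CW (q.2, q.1) = CW q)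
    (hs2 : ∀ q, CW (-q.2, -q.1) = CW q)
    (hT : ∀ q ∈ k7T, 4 * CW q = |4 * (q.2 ^ 2 - q.1 ^ 2)| * W 0 (k7s q))
    (hWI : ∀ e, IntegrableOn (W e) omegaDom)
    (hWp : ∀ e, ∀ q ∈ omegaDom, 0 < W e q)
    (hk : ∀ e, 0 < κ e)
    (hm : ∀ e, ∀ q ∈ omegaDom, evalP (k7m e) q * W 0 q = κ e * W e q) : K7Hyp CW W κ := by
  refine ⟨?_, hWI, hWp, hk, ?_⟩
  · have := (k7_main_int hs1 hs2 hT 1).1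
    have h1 : ∀ q, evalP 1 q = 1 := fun q => map_one _
    simp only [k7_qs_one, h1, one_mul] at this
    exact this.2 (hWI 0)
  · intro e f P R
    by_cases hef : e = f
    · subst hef
      rw [if_pos rfl]
      have := (k7_main_int hs1 hs2 hT (k7m e * (P * R))).2
      calc _ = ∫ q in sqDom, evalP (quadSub (k7m e * (P * R))) q * CW q := by
            congr 1; ext q
            rw [k7_qs_mul, k7_qs_mul, ← k7_M_sq]
            simp only [k7_ev_mul]; ring
        _ = _ := by
            rw [this, ← integral_const_mul]
            refine setIntegral_congr_fun k7_om_meas fun q hq => ?_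
            simp only [k7_ev_mul]
            linear_combination (evalP P q * evalP R q) * hm e q hq
    · rw [if_neg hef]
      have hM : ∀ (q : ℝ × ℝ), evalP (k7M 0) q = 1 ∧ evalP (k7M 1) q = q.1 ^ 2 - q.2 ^ 2 ∧
          evalP (k7M 2) q = q.1 + q.2 ∧ evalP (k7M 3) q = q.1 - q.2 := by
        intro q; simp [k7M, evalP]
      have A : (∀ q : ℝ × ℝ, evalP (k7M e) (q.2, q.1) * evalP (k7M f) (q.2, q.1) =
            -(evalP (k7M e) q * evalP (k7M f) q)) ∨
          (∀ q : ℝ × ℝ, evalP (k7M e) (-q.2, -q.1) * evalP (k7M f) (-q.2, -q.1) =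
            -(evalP (k7M e) q * evalP (k7M f) q)) := by
        fin_cases e <;> fin_cases f <;>
          first
            | exact absurd rfl hef
            | (left; intro q; simp only [Fin.zero_eta, Fin.mk_one, Fin.reduceFinMk, hM]; ring1)
            | (right; intro q; simp only [Fin.zero_eta, Fin.mk_one, Fin.reduceFinMk, hM]; ring1)
      rcases A with A | A
      · refine k7_odd1 _ fun q => ?_
        simp only [k7_ev_mul, k7_ev_qs, k7_s1, hs1]
        linear_combination (evalP P (k7s q) * evalP R (k7s q) * CW q) * A q
      · refine k7_odd2 _ fun q => ?_
        simp only [k7_ev_mul, k7_ev_qs, k7_s2, hs2]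
        linear_combination (evalP P (k7s q) * evalP R (k7s q) * CW q) * A q

lemma k7_int_of_one {D : Set (ℝ × ℝ)} {W V : ℝ × ℝ → ℝ} (h : (∫ q in D, V q) = 1)
    (hW : ∀ q, W q = V q) : IntegrableOn W D := by
  have : W = V := funext hW
  rw [this]
  by_contra hn
  rw [integral_undef hn] at h
  exact zero_ne_one h

lemma k7_sqrt {a b : ℝ} (ha : 0 < a) (hb : 0 < b) :
    Real.sqrt (a / b) * Real.sqrt (a / b) * (b / a) = 1 := by
  rw [Real.mul_self_sqrt (by positivity)]
  field_simp

/-- the orthonormal bases of `V_{2n}(𝒲_{α,β,γ})` and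
`V_{2n+1}(𝒲_{α,β,γ})` on the square, built from orthonormal bases for the
Koornwinder weights `W_{α',β',γ}` on `Ω`. -/
theorem stmt_7
    (α β γ : ℝ) (hα : -1 < α) (hβ : -1 < β) (hγ : -1 < γ)
    (hαγ : 0 < α + γ + 3/2) (hβγ : 0 < β + γ + 3/2)
    (a00 a11 a01 a10 : ℝ)
    (ha00p : 0 < a00) (ha11p : 0 < a11) (ha01p : 0 < a01) (ha10p : 0 < a10)
    (ha00 : (∫ q in omegaDom, 2 * a00 * (1 - q.1 + q.2) ^ α * (1 + q.1 + q.2) ^ β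
        * (q.1^2 - 4*q.2) ^ γ) = 1)
    (ha11 : (∫ q in omegaDom, 2 * a11 * (1 - q.1 + q.2) ^ (α+1) * (1 + q.1 + q.2) ^ (β+1)
        * (q.1^2 - 4*q.2) ^ γ) = 1)
    (ha01 : (∫ q in omegaDom, 2 * a01 * (1 - q.1 + q.2) ^ α * (1 + q.1 + q.2) ^ (β+1)
        * (q.1^2 - 4*q.2) ^ γ) = 1)
    (ha10 : (∫ q in omegaDom, 2 * a10 * (1 - q.1 + q.2) ^ (α+1) * (1 + q.1 + q.2) ^ β
        * (q.1^2 - 4*q.2) ^ γ) = 1)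
    (Wab Wa1b1 Wab1 Wa1b : ℝ × ℝ → ℝ)
    (hWab : ∀ q : ℝ × ℝ, Wab q
      = 2 * a00 * (1 - q.1 + q.2) ^ α * (1 + q.1 + q.2) ^ β * (q.1^2 - 4*q.2) ^ γ)
    (hWa1b1 : ∀ q : ℝ × ℝ, Wa1b1 q
      = 2 * a11 * (1 - q.1 + q.2) ^ (α+1) * (1 + q.1 + q.2) ^ (β+1) * (q.1^2 - 4*q.2) ^ γ)
    (hWab1 : ∀ q : ℝ × ℝ, Wab1 q
      = 2 * a01 * (1 - q.1 + q.2) ^ α * (1 + q.1 + q.2) ^ (β+1) * (q.1^2 - 4*q.2) ^ γ)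
    (hWa1b : ∀ q : ℝ × ℝ, Wa1b q
      = 2 * a10 * (1 - q.1 + q.2) ^ (α+1) * (1 + q.1 + q.2) ^ β * (q.1^2 - 4*q.2) ^ γ)
    (CW : ℝ × ℝ → ℝ)
    (hCW : ∀ q : ℝ × ℝ, CW q
      = 2 * a00 * (4:ℝ) ^ γ * |q.1 - q.2| ^ (2*α+1) * |q.1 + q.2| ^ (2*β+1)
        * (1 - q.1^2) ^ γ * (1 - q.2^2) ^ γ)
    (Pab Pa1b1 Pab1 Pa1b : ℕ → ℕ → MvPolynomial (Fin 2) ℝ)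
    (hPab : ∀ n, isONBVn omegaDom Wab n (fun k => Pab k n))
    (hPa1b1 : ∀ n, isONBVn omegaDom Wa1b1 n (fun k => Pa1b1 k n))
    (hPab1 : ∀ n, isONBVn omegaDom Wab1 n (fun k => Pab1 k n))
    (hPa1b : ∀ n, isONBVn omegaDom Wa1b n (fun k => Pa1b k n)) :
    ∀ n : ℕ,
      isONBVn sqDom CW (2*n) (fun k =>
        if k ≤ n then quadSub (Pab k n)
        else MvPolynomial.C (Real.sqrt (a11 / a00)) *
          ((MvPolynomial.X 0 ^ 2 - MvPolynomial.X 1 ^ 2)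
            * quadSub (Pa1b1 (k - n - 1) (n - 1)))) ∧
      isONBVn sqDom CW (2*n+1) (fun k =>
        if k ≤ n then MvPolynomial.C (Real.sqrt (a01 / a00)) *
          ((MvPolynomial.X 0 + MvPolynomial.X 1) * quadSub (Pab1 k n))
        else MvPolynomial.C (Real.sqrt (a10 / a00)) *
          ((MvPolynomial.X 0 - MvPolynomial.X 1) * quadSub (Pa1b (k - n - 1) n))) := by
  intro n
  have hpos : ∀ (a s t : ℝ), 0 < a → ∀ q ∈ omegaDom,
      0 < 2 * a * (1 - q.1 + q.2) ^ s * (1 + q.1 + q.2) ^ t * (q.1^2 - 4*q.2) ^ γ := by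
    intro a s t ha q hq
    obtain ⟨h1, h2, h3⟩ := k7_om_pos hq
    positivity
  have H : K7Hyp CW ![Wab, Wa1b1, Wab1, Wa1b] ![1, a00 / a11, a00 / a01, a00 / a10] := by
    refine k7_hyp ?_ ?_ ?_ ?_ ?_ ?_ ?_
    · intro q
      simp only [hCW]
      rw [abs_sub_comm q.2 q.1, add_comm q.2 q.1]; ring
    · intro q
      simp only [hCW]
      rw [show -q.2 - -q.1 = q.1 - q.2 by ring, show -q.2 + -q.1 = -(q.1 + q.2) by ring, abs_neg,
        neg_sq, neg_sq]
      ring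
    · rintro ⟨x, y⟩ hq
      have := k7_weight α β γ a00 x y hq
      simp only [hCW, Matrix.cons_val_zero, hWab, k7s]
      exact this
    · intro e
      fin_cases e
      · exact k7_int_of_one ha00 hWab
      · exact k7_int_of_one ha11 hWa1b1
      · exact k7_int_of_one ha01 hWab1
      · exact k7_int_of_one ha10 hWa1b
    · intro e q hq
      fin_cases e
      · exact (hpos a00 α β ha00p q hq).trans_eq (hWab q).symm
      · exact (hpos a11 (α+1) (β+1) ha11p q hq).trans_eq (hWa1b1 q).symm
      · exact (hpos a01 α (β+1) ha01p q hq).trans_eq (hWab1 q).symm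
      · exact (hpos a10 (α+1) β ha10p q hq).trans_eq (hWa1b q).symm
    · intro e
      fin_cases e
      · exact one_pos
      · exact div_pos ha00p ha11p
      · exact div_pos ha00p ha01p
      · exact div_pos ha00p ha10p
    · intro e q hq
      obtain ⟨h1, h2, h3⟩ := k7_om_pos hq
      fin_cases e
      · simp [k7m, evalP]
      · simp only [k7m, Fin.mk_one, Matrix.cons_val, k7_ev_mul, k7_ev_plus, k7_ev_minus, hWab,
          hWa1b1, Real.rpow_add_one h1.ne', Real.rpow_add_one h2.ne']
        field_simp
      · simp only [k7m, Fin.reduceFinMk, Matrix.cons_val, k7_ev_plus, hWab,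
          hWab1, Real.rpow_add_one h2.ne']
        field_simp
      · simp only [k7m, Fin.reduceFinMk, Matrix.cons_val, k7_ev_minus, hWab,
          hWa1b, Real.rpow_add_one h1.ne']
        field_simp
  constructor
  · have := k7_onb H 0 1 (by decide) (2 * n) n n (by simp [k7d])
      (by intro d; simp only [k7d, Matrix.cons_val]; omega) (by omega)
      (by intro g h0 h1 d
          fin_cases g
          · exact absurd rfl h0
          · exact absurd rfl h1
          · simp only [k7d, Fin.reduceFinMk, Matrix.cons_val]; omega
          · simp only [k7d, Fin.reduceFinMk, Matrix.cons_val]; omega)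
      1 (Real.sqrt (a11 / a00)) (by simp) (k7_sqrt ha11p ha00p)
      (fun k => Pab k n) (fun k => Pa1b1 k (n - 1)) (hPab n) (fun _ => hPa1b1 (n - 1))
    simpa [k7M] using this
  · have := k7_onb H 2 3 (by decide) (2 * n + 1) n (n + 1) (by simp [k7d])
      (by intro d; simp only [k7d, Matrix.cons_val]; omega) (by omega)
      (by intro g h0 h1 d
          fin_cases g
          · simp only [k7d, Fin.zero_eta, Matrix.cons_val]; omega
          · simp only [k7d, Fin.mk_one, Matrix.cons_val]; omega
          · exact absurd rfl h0
          · exact absurd rfl h1)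
      (Real.sqrt (a01 / a00)) (Real.sqrt (a10 / a00)) (k7_sqrt ha01p ha00p) (k7_sqrt ha10p ha00p)
      (fun k => Pab1 k n) (fun k => Pa1b k n) (hPab1 n) (fun _ => hPa1b n)
    simpa [k7M] using this
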